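/- Let γ be an admissible curve in G¹₃ whose equiform curvature 𝒦 is identically zero and whose equiform torsion 𝒯 is a nonzero constant (an equiform Bertrand curve). Then for every x ∈ I, Q₃(x) lies in the linear span of N(x) (so γ is of weak equiform AW(3)-type), but Q₃(x) does not lie in the linear span of B(x) for any x (so γ is not of weak equiform AW(2)-type). -/

import Mathlib

noncomputable section

open Real

/-- Model of the pseudo-Galilean space `G¹₃` as `ℝ³`. -/
abbrev V3 := ℝ × ℝ × ℝ

/-- The pseudo-Galilean scalar product on `ℝ³`. -/
def pgInner (u v : V3) : ℝ :=
  if u.1 ≠ 0 ∨ v.1 ≠ 0 then u.1 * v.1 else u.2.1 * v.2.1 - u.2.2 * v.2.2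

/-- Curvature of the admissible curve `x ↦ (x, y x, z x)`. -/
def curv (y z : ℝ → ℝ) (x : ℝ) : ℝ :=
  Real.sqrt |(deriv (deriv y) x) ^ 2 - (deriv (deriv z) x) ^ 2|

/-- Torsion of the admissible curve `x ↦ (x, y x, z x)`. -/
def tors (y z : ℝ → ℝ) (x : ℝ) : ℝ :=
  (deriv (deriv y) x * deriv (deriv (deriv z)) x -
    deriv (deriv (deriv y)) x * deriv (deriv z) x) / (curv y z x) ^ 2

/-- Radius of curvature `ρ = 1/κ`. -/
def rho (y z : ℝ → ℝ) (x : ℝ) : ℝ := 1 / curv y z x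

/-- Equiform curvature `𝒦 = ρ'`. -/
def eqK (y z : ℝ → ℝ) (x : ℝ) : ℝ := deriv (rho y z) x

/-- Equiform torsion `𝒯 = ρ·τ`. -/
def eqT (y z : ℝ → ℝ) (x : ℝ) : ℝ := rho y z x * tors y z x

/-- Frenet tangent `e₁ = (1, y', z')`. -/
def e1 (y z : ℝ → ℝ) (x : ℝ) : V3 := (1, deriv y x, deriv z x)

/-- Frenet principal normal `e₂ = (1/κ)(0, y'', z'')`. -/
def e2 (y z : ℝ → ℝ) (x : ℝ) : V3 :=
  (0, deriv (deriv y) x / curv y z x, deriv (deriv z) x / curv y z x)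

/-- Frenet binormal `e₃ = (1/κ)(0, ε·z'', ε·y'')`. -/
def e3 (y z : ℝ → ℝ) (ε : ℝ) (x : ℝ) : V3 :=
  (0, ε * deriv (deriv z) x / curv y z x, ε * deriv (deriv y) x / curv y z x)

/-- Equiform tangent `T = ρ·e₁`. -/
def Tv (y z : ℝ → ℝ) (x : ℝ) : V3 := rho y z x • e1 y z x

/-- Equiform principal normal `N = ρ·e₂`. -/
def Nv (y z : ℝ → ℝ) (x : ℝ) : V3 := rho y z x • e2 y z x

/-- Equiform binormal `B = ρ·e₃`. -/
def Bv (y z : ℝ → ℝ) (ε : ℝ) (x : ℝ) : V3 := rho y z x • e3 y z ε x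

/-- Derivative with respect to the equiform parameter: `f° = ρ·f'`. -/
def eqD {E : Type*} [NormedAddCommGroup E] [NormedSpace ℝ E]
    (y z : ℝ → ℝ) (f : ℝ → E) (x : ℝ) : E := rho y z x • deriv f x

/-- `Q₁ = ρ⁻²·N`. -/
def Q1 (y z : ℝ → ℝ) (x : ℝ) : V3 := ((rho y z x) ^ (-2 : ℤ)) • Nv y z x

/-- `Q₂ = ρ⁻³·(−𝒦N + 𝒯B)`. -/
def Q2 (y z : ℝ → ℝ) (ε : ℝ) (x : ℝ) : V3 :=
  ((rho y z x) ^ (-3 : ℤ)) • ((-(eqK y z x)) • Nv y z x + (eqT y z x) • Bv y z ε x)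

/-- `Q₃ = ρ⁻⁴·[(2𝒦² + 𝒯² − 𝒦°)N + (𝒯° − 3𝒦𝒯)B]`. -/
def Q3 (y z : ℝ → ℝ) (ε : ℝ) (x : ℝ) : V3 :=
  ((rho y z x) ^ (-4 : ℤ)) •
    ((2 * (eqK y z x) ^ 2 + (eqT y z x) ^ 2 - eqD y z (eqK y z) x) • Nv y z x +
      (eqD y z (eqT y z) x - 3 * eqK y z x * eqT y z x) • Bv y z ε x)

/-! At an admissible point `N` and `B` are linearly independent, so `Q₃` is a multiple of one of
them if and only if its coefficient along the other vanishes. When `𝒦` is zero and `𝒯` is constant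
along the curve, `𝒦° = 𝒯° = 0`, so the coefficient `𝒯° - 3𝒦𝒯` along `B` vanishes, while the
coefficient `2𝒦² + 𝒯² - 𝒦°` along `N` is `𝒯² ≠ 0`. -/

section LinearAlgebra

variable {R M : Type*} [Semiring R] [AddCommMonoid M] [Module R M] {u v : M}

theorem smul_add_smul_mem_span_singleton_left_iff (h : LinearIndependent R ![u, v]) {a b : R} :
    a • u + b • v ∈ Submodule.span R {u} ↔ b = 0 :=
  Submodule.mem_span_singleton.trans
    ⟨fun ⟨k, hk⟩ ↦ (h.eq_of_pair (s := a) (t := b) (s' := k) (t' := 0) (by simp [hk])).2,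
      fun hb ↦ ⟨a, by simp [hb]⟩⟩

theorem smul_add_smul_mem_span_singleton_right_iff (h : LinearIndependent R ![u, v]) {a b : R} :
    a • u + b • v ∈ Submodule.span R {v} ↔ a = 0 :=
  Submodule.mem_span_singleton.trans
    ⟨fun ⟨k, hk⟩ ↦ (h.eq_of_pair (s := a) (t := b) (s' := 0) (t' := k) (by simp [hk])).1,
      fun ha ↦ ⟨b, by simp [ha]⟩⟩

theorem linearIndependent_pair_of_sq_sub_sq_ne_zero {S : Type*} [CommRing S]
    [NoZeroDivisors S] {p q : S} (h : p ^ 2 - q ^ 2 ≠ 0) :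
    LinearIndependent S ![((0 : S), p, q), ((0 : S), q, p)] := by
  refine LinearIndependent.pair_iff.mpr fun a b hab ↦ ?_
  simp only [Prod.smul_mk, Prod.mk_add_mk, Prod.mk_eq_zero, smul_eq_mul] at hab
  obtain ⟨-, hp, hq⟩ := hab
  have ha : a * (p ^ 2 - q ^ 2) = 0 := by linear_combination p * hp - q * hq
  have hb : b * (p ^ 2 - q ^ 2) = 0 := by linear_combination p * hq - q * hp
  exact ⟨(mul_eq_zero.mp ha).resolve_right h, (mul_eq_zero.mp hb).resolve_right h⟩

end LinearAlgebra

section EquiformFrame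

variable {y z : ℝ → ℝ} {ε x : ℝ}

theorem rho_ne_zero (hadm : deriv (deriv y) x ^ 2 - deriv (deriv z) x ^ 2 ≠ 0) :
    rho y z x ≠ 0 :=
  one_div_ne_zero (Real.sqrt_ne_zero'.mpr (abs_pos.mpr hadm))

theorem Nv_eq_smul (y z : ℝ → ℝ) (x : ℝ) :
    Nv y z x = rho y z x ^ 2 • (0, deriv (deriv y) x, deriv (deriv z) x) := by
  simp only [Nv, e2, rho, Prod.smul_mk, smul_eq_mul, Prod.mk.injEq]
  exact ⟨by ring, by ring, by ring⟩

theorem Bv_eq_smul (y z : ℝ → ℝ) (ε x : ℝ) :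
    Bv y z ε x = (rho y z x ^ 2 * ε) • (0, deriv (deriv z) x, deriv (deriv y) x) := by
  simp only [Bv, e3, rho, Prod.smul_mk, smul_eq_mul, Prod.mk.injEq]
  exact ⟨by ring, by ring, by ring⟩

theorem linearIndependent_Nv_Bv (hε : ε ≠ 0)
    (hadm : deriv (deriv y) x ^ 2 - deriv (deriv z) x ^ 2 ≠ 0) :
    LinearIndependent ℝ ![Nv y z x, Bv y z ε x] := by
  have hρ : rho y z x ^ 2 ≠ 0 := pow_ne_zero 2 (rho_ne_zero hadm)
  rw [Nv_eq_smul, Bv_eq_smul,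
    LinearIndependent.pair_smul_smul_iff hρ.isUnit (mul_ne_zero hρ hε).isUnit]
  exact linearIndependent_pair_of_sq_sub_sq_ne_zero hadm

theorem Q3_mem_span_Nv_iff (hε : ε ≠ 0)
    (hadm : deriv (deriv y) x ^ 2 - deriv (deriv z) x ^ 2 ≠ 0) :
    Q3 y z ε x ∈ Submodule.span ℝ {Nv y z x} ↔
      eqD y z (eqT y z) x = 3 * eqK y z x * eqT y z x := by
  rw [Q3, Submodule.smul_mem_iff _ (zpow_ne_zero _ (rho_ne_zero hadm)),
    smul_add_smul_mem_span_singleton_left_iff (linearIndependent_Nv_Bv hε hadm), sub_eq_zero]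

theorem Q3_mem_span_Bv_iff (hε : ε ≠ 0)
    (hadm : deriv (deriv y) x ^ 2 - deriv (deriv z) x ^ 2 ≠ 0) :
    Q3 y z ε x ∈ Submodule.span ℝ {Bv y z ε x} ↔
      2 * eqK y z x ^ 2 + eqT y z x ^ 2 = eqD y z (eqK y z) x := by
  rw [Q3, Submodule.smul_mem_iff _ (zpow_ne_zero _ (rho_ne_zero hadm)),
    smul_add_smul_mem_span_singleton_right_iff (linearIndependent_Nv_Bv hε hadm), sub_eq_zero]

theorem eqD_eq_zero_of_eventuallyEq_const {E : Type*} [NormedAddCommGroup E] [NormedSpace ℝ E]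
    {f : ℝ → E} {a : E} (hf : f =ᶠ[nhds x] fun _ ↦ a) :
    eqD y z f x = 0 := by
  rw [eqD, hf.deriv_eq, deriv_const, smul_zero]

end EquiformFrame

/-- an equiform Bertrand curve (`𝒦 ≡ 0`, `𝒯` a nonzero constant) is of weak
equiform AW(3)-type (`Q₃ ∈ span{N}`) but not of weak equiform AW(2)-type (`Q₃ ∉ span{B}`). -/
theorem pg_bertrand_weak_AW_types (I : Set ℝ) (y z : ℝ → ℝ) (ε : ℝ) (c : ℝ)
    (hI : IsOpen I) (hy : ContDiff ℝ (⊤ : ℕ∞) y) (hz : ContDiff ℝ (⊤ : ℕ∞) z)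
    (hadm : ∀ x ∈ I, (deriv (deriv y) x) ^ 2 - (deriv (deriv z) x) ^ 2 ≠ 0)
    (hε : ε = 1 ∨ ε = -1)
    (hsign : ∀ x ∈ I, 0 < ε * ((deriv (deriv y) x) ^ 2 - (deriv (deriv z) x) ^ 2))
    (hc : c ≠ 0) (hK : ∀ x ∈ I, eqK y z x = 0) (hT : ∀ x ∈ I, eqT y z x = c) :
    ∀ x ∈ I,
      Q3 y z ε x ∈ Submodule.span ℝ {Nv y z x} ∧
      Q3 y z ε x ∉ Submodule.span ℝ {Bv y z ε x} := by
  intro x hx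
  have hε₀ : ε ≠ 0 := left_ne_zero_of_mul (hsign x hx).ne'
  have hK' : eqD y z (eqK y z) x = 0 :=
    eqD_eq_zero_of_eventuallyEq_const (Filter.eventually_of_mem (hI.mem_nhds hx) hK)
  have hT' : eqD y z (eqT y z) x = 0 :=
    eqD_eq_zero_of_eventuallyEq_const (Filter.eventually_of_mem (hI.mem_nhds hx) hT)
  rw [Q3_mem_span_Nv_iff hε₀ (hadm x hx), Q3_mem_span_Bv_iff hε₀ (hadm x hx),
    hK', hT', hK x hx, hT x hx]
  exact ⟨by simp, by simpa using hc⟩
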